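/- Let α > 0, m = ⌈α⌉, and suppose f : [a,b] → ℝ is such that f^{(m-1)} is absolutely continuous on [a,b], f^{(k)}(b) = 0 for k = 1, ..., m-1, and D_{b-}^α f is essentially bounded on [a,b]. Then |f(b) - (1/(b-a)) ∫_a^b f(u) du| ≤ (‖D_{b-}^α f‖_{L^∞([a,b])} / Γ(α+2)) (b-a)^α. -/

import Mathlib

open MeasureTheory intervalIntegral

/-- `f ∈ AC^m([a,b])`: `f` is `(m-1)`-times continuously differentiable on `[a,b]` and
`f^{(m-1)}` is absolutely continuous on `[a,b]`, i.e. `f^{(m-1)}` is recovered by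
integrating its (a.e.) derivative `f^{(m)}`, which is integrable on `[a,b]`. -/
def IsACDeriv (m : ℕ) (a b : ℝ) (f : ℝ → ℝ) : Prop :=
  ContDiffOn ℝ (m - 1 : ℕ) f (Set.Icc a b) ∧
  IntervalIntegrable (iteratedDerivWithin m f (Set.Icc a b)) MeasureTheory.volume a b ∧
  ∀ x ∈ Set.Icc a b,
    iteratedDerivWithin (m - 1) f (Set.Icc a b) x
      = iteratedDerivWithin (m - 1) f (Set.Icc a b) a
        + ∫ t in a..x, iteratedDerivWithin m f (Set.Icc a b) t

/-- The right Caputo fractional derivative `D_{b-}^α f` of order `α > 0` of `f` on `[a,b]`: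
with `m = ⌈α⌉`, it is `((-1)^m / Γ(m-α)) ∫_x^b (t-x)^{m-α-1} f^{(m)}(t) dt` when `α ∉ ℕ`,
and `(-1)^m f^{(m)}(x)` when `α = m ∈ ℕ`. -/
noncomputable def rightCaputoDeriv (α a b : ℝ) (f : ℝ → ℝ) (x : ℝ) : ℝ :=
  if α = (⌈α⌉₊ : ℝ) then
    (-1 : ℝ) ^ (⌈α⌉₊ : ℕ) * iteratedDerivWithin ⌈α⌉₊ f (Set.Icc a b) x
  else
    ((-1 : ℝ) ^ (⌈α⌉₊ : ℕ) / Real.Gamma ((⌈α⌉₊ : ℝ) - α)) *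
      ∫ t in x..b, (t - x) ^ ((⌈α⌉₊ : ℝ) - α - 1) * iteratedDerivWithin ⌈α⌉₊ f (Set.Icc a b) t


lemma ibp_aux (a b : ℝ) (hab : a < b) (F g : ℝ → ℝ) (hg : IntervalIntegrable g volume a b)
    (hF : ∀ x ∈ Set.Icc a b, F x = F a + ∫ t in a..x, g t) (k : ℕ) :
    ∫ t in a..b, F t * ((t - a) ^ k / (k.factorial : ℝ)) =
      F b * ((b - a) ^ (k+1) / ((k+1).factorial : ℝ))
       - ∫ t in a..b, g t * ((t - a) ^ (k+1) / ((k+1).factorial : ℝ)) := by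
  have hI : AbsolutelyContinuousOnInterval (fun x => F a + ∫ t in a..x, g t) a b := by
    refine AbsolutelyContinuousOnInterval.fun_add ?_ ?_
    · exact ContDiffOn.absolutelyContinuousOnInterval contDiffOn_const
    · exact hg.absolutelyContinuousOnInterval_intervalIntegral (by simp)
  have hP : AbsolutelyContinuousOnInterval
      (fun t : ℝ => (t - a) ^ (k+1) / ((k+1).factorial : ℝ)) a b := by
    apply ContDiffOn.absolutelyContinuousOnInterval
    fun_prop
  have hPd : ∀ t, deriv (fun t : ℝ => (t - a) ^ (k+1) / ((k+1).factorial : ℝ)) t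
      = (t - a) ^ k / (k.factorial : ℝ) := by
    intro t
    have h1 : HasDerivAt (fun t : ℝ => (t - a) ^ (k+1) / ((k+1).factorial : ℝ)) _ t :=
      (((hasDerivAt_id t).sub_const a).pow (k+1)).div_const ((k+1).factorial : ℝ)
    rw [h1.deriv, Nat.factorial_succ]
    have : (k.factorial : ℝ) ≠ 0 := by positivity
    push_cast
    simp
    field_simp
  have key := hI.integral_mul_deriv_eq_deriv_mul hP
  simp only [hPd] at key
  have e1 : ∫ t in a..b, F t * ((t - a) ^ k / (k.factorial : ℝ)) =
      ∫ t in a..b, (F a + ∫ t in a..t, g t) * ((t - a) ^ k / (k.factorial : ℝ)) := by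
    apply integral_congr
    intro t ht
    rw [Set.uIcc_of_le hab.le] at ht
    simp only [hF t ht]
  have e2 : ∫ t in a..b, g t * ((t - a) ^ (k+1) / ((k+1).factorial : ℝ)) =
     ∫ t in a..b, deriv (fun x => F a + ∫ t in a..x, g t) t * ((t - a) ^ (k+1) / ((k+1).factorial : ℝ)) := by
    apply intervalIntegral.integral_congr_ae
    filter_upwards [hg.ae_hasDerivAt_integral] with t ht htt
    rw [((ht (Set.uIoc_subset_uIcc htt) a (by simp)).const_add (F a)).deriv]
  rw [e1, e2, key, hF b (by simp [hab.le])]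
  simp

lemma chain_aux (m : ℕ) (a b : ℝ) (hab : a < b) (f : ℝ → ℝ) (hm : 1 ≤ m)
    (hc : ContDiffOn ℝ (m - 1 : ℕ) f (Set.Icc a b))
    (hi : IntervalIntegrable (iteratedDerivWithin m f (Set.Icc a b)) volume a b)
    (hr : ∀ x ∈ Set.Icc a b,
    iteratedDerivWithin (m - 1) f (Set.Icc a b) x
      = iteratedDerivWithin (m - 1) f (Set.Icc a b) a
        + ∫ t in a..x, iteratedDerivWithin m f (Set.Icc a b) t)
    (hfb : ∀ k : ℕ, 1 ≤ k → k < m → iteratedDerivWithin k f (Set.Icc a b) b = 0) :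
    (∫ t in a..b, f t) - (b - a) * f b =
      (-1) ^ m * ∫ t in a..b, iteratedDerivWithin m f (Set.Icc a b) t *
        ((t - a) ^ m / (m.factorial : ℝ)) := by
  have hu := uniqueDiffOn_Icc hab
  have step : ∀ k, k < m → IntervalIntegrable (iteratedDerivWithin (k+1) f (Set.Icc a b)) volume a b
     ∧ ∀ x ∈ Set.Icc a b, iteratedDerivWithin k f (Set.Icc a b) x
      = iteratedDerivWithin k f (Set.Icc a b) a
        + ∫ t in a..x, iteratedDerivWithin (k+1) f (Set.Icc a b) t := by
    intro k hk
    by_cases hkm : k + 1 = m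
    · subst hkm
      exact ⟨hi, by simpa using hr⟩
    · have hk1 : k + 1 ≤ m - 1 := by omega
      have hcont : ContinuousOn (iteratedDerivWithin (k+1) f (Set.Icc a b)) (Set.Icc a b) :=
        hc.continuousOn_iteratedDerivWithin (by exact_mod_cast hk1) hu
      refine ⟨hcont.intervalIntegrable_of_Icc hab.le, fun x hx => ?_⟩
      have hd : DifferentiableOn ℝ (iteratedDerivWithin k f (Set.Icc a b)) (Set.Icc a b) :=
        hc.differentiableOn_iteratedDerivWithin (by exact_mod_cast hk1) hu
      have hsub : Set.Icc a x ⊆ Set.Icc a b := Set.Icc_subset_Icc_right hx.2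
      rw [integral_eq_sub_of_hasDerivAt_of_le hx.1 (hd.continuousOn.mono hsub)]
      · ring
      · intro y hy
        have hy' : Set.Icc a b ∈ nhds y := Icc_mem_nhds hy.1 (hy.2.trans_le hx.2)
        rw [iteratedDerivWithin_succ]
        exact (hd y (mem_of_mem_nhds hy')).hasDerivWithinAt.hasDerivAt hy'
      · exact (hcont.mono hsub).intervalIntegrable_of_Icc hx.1
  have main : ∀ k, 1 ≤ k → k ≤ m → (∫ t in a..b, f t) - (b - a) * f b =
      (-1) ^ k * ∫ t in a..b, iteratedDerivWithin k f (Set.Icc a b) t *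
        ((t - a) ^ k / (k.factorial : ℝ)) := by
    intro k hk
    induction k, hk using Nat.le_induction with
    | base =>
      intro _
      have := ibp_aux a b hab _ _ (step 0 hm).1 (step 0 hm).2 0
      simp at this ⊢
      rw [this]; ring
    | succ k hk ih =>
      intro hkm
      rw [ih (by omega), ibp_aux a b hab _ _ (step k hkm).1 (step k hkm).2 k, hfb k hk hkm]
      ring
  exact main m hm le_rfl

lemma beta_aux (p q c : ℝ) (hp : 0 < p) (hq : 0 < q) (hc : 0 < c) :
    ∫ x in (0:ℝ)..c, x ^ (p - 1) * (c - x) ^ (q - 1) =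
      c ^ (p + q - 1) * (Real.Gamma p * Real.Gamma q / Real.Gamma (p + q)) := by
  have h := Complex.betaIntegral_scaled p q hc
  rw [Complex.betaIntegral_eq_Gamma_mul_div _ _ (by simpa) (by simpa)] at h
  apply Complex.ofReal_injective
  rw [← intervalIntegral.integral_ofReal]
  have e : ∫ x in (0:ℝ)..c, ((x ^ (p - 1) * (c - x) ^ (q - 1) : ℝ) : ℂ) =
     ∫ x in (0:ℝ)..c, (x : ℂ) ^ ((p:ℂ) - 1) * ((c : ℂ) - x) ^ ((q:ℂ) - 1) := by
    apply integral_congr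
    intro x hx
    rw [Set.uIcc_of_le hc.le] at hx
    simp only
    rw [Complex.ofReal_mul, Complex.ofReal_cpow hx.1, Complex.ofReal_cpow (by linarith [hx.2])]
    push_cast; rfl
  rw [e, h]
  rw [Complex.ofReal_mul, Complex.ofReal_cpow hc.le]
  push_cast [← Complex.Gamma_ofReal]
  rfl

lemma beta_aux' (α β a t : ℝ) (hα : 0 < α) (hβ : 0 < β) (hat : a < t) :
    ∫ x in a..t, (x - a) ^ α * (t - x) ^ (β - 1) =
      (t - a) ^ (α + β) * (Real.Gamma (α + 1) * Real.Gamma β / Real.Gamma (α + β + 1)) := by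
  have h := beta_aux (α + 1) β (t - a) (by linarith) hβ (by linarith)
  have h2 := intervalIntegral.integral_comp_sub_right (a := a) (b := t)
    (fun x : ℝ => x ^ (α + 1 - 1) * (t - a - x) ^ (β - 1)) a
  rw [sub_self, h] at h2
  have e : α + 1 + β = α + β + 1 := by ring
  simp only [e, add_sub_cancel_right] at h2
  rw [← h2]
  congr 1; ext x; congr 2; ring

lemma fubini_aux (α β a b : ℝ) (hα : 0 < α) (hβ : 0 < β) (hab : a < b) (g : ℝ → ℝ)
    (hg : IntervalIntegrable g volume a b) :
    ∫ x in a..b, (x - a) ^ α * ∫ t in x..b, (t - x) ^ (β - 1) * g t =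
    ∫ t in a..b, g t * ∫ x in a..t, (x - a) ^ α * (t - x) ^ (β - 1) := by
  set G : ℝ → ℝ := (Set.Ioc a b).indicator g with hG
  set W : ℝ → ℝ := (Set.Ioc a b).indicator (fun x => (x - a) ^ α) with hW
  set H : ℝ → ℝ := (Set.Ioc 0 (b - a)).indicator (fun s => s ^ (β - 1)) with hH
  have iG : Integrable G := by
    rw [hG, integrable_indicator_iff measurableSet_Ioc]
    exact (intervalIntegrable_iff_integrableOn_Ioc_of_le hab.le).1 hg
  have iH : Integrable H := by
    rw [hH, integrable_indicator_iff measurableSet_Ioc]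
    exact (intervalIntegrable_iff_integrableOn_Ioc_of_le (by linarith)).1
      (intervalIntegral.intervalIntegrable_rpow' (by linarith))
  have iH' : Integrable (fun s => H (-s)) := iH.comp_neg
  have i1 := iG.convolution_integrand (ContinuousLinearMap.mul ℝ ℝ) iH'
  have mW : Measurable W := by
    apply Measurable.indicator _ measurableSet_Ioc
    fun_prop
  have bW : ∀ x, ‖W x‖ ≤ (b - a) ^ α := by
    intro x
    by_cases hx : x ∈ Set.Ioc a b
    · have h0 : 0 ≤ x - a := by linarith [hx.1]
      rw [hW, Set.indicator_of_mem hx, Real.norm_of_nonneg (by positivity)]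
      exact Real.rpow_le_rpow h0 (by linarith [hx.2]) hα.le
    · rw [hW, Set.indicator_of_notMem hx, norm_zero]
      exact Real.rpow_nonneg (by linarith) _
  have i2 : Integrable (Function.uncurry fun x t => W x * (G t * H (t - x)))
      (volume.prod volume) := by
    have := i1.bdd_mul (c := (b - a) ^ α) (f := fun p : ℝ × ℝ => W p.1)
      (mW.comp measurable_fst).aestronglyMeasurable (Filter.Eventually.of_forall fun p => bW p.1)
    refine this.congr (Filter.Eventually.of_forall fun p => ?_)
    simp [Function.uncurry]
  have sw := integral_integral_swap i2
  have L : ∀ x, (∫ t, W x * (G t * H (t - x))) =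
      (Set.Ioc a b).indicator (fun x => (x - a) ^ α * ∫ t in x..b, (t - x) ^ (β - 1) * g t) x := by
    intro x
    by_cases hx : x ∈ Set.Ioc a b
    · rw [MeasureTheory.integral_const_mul, Set.indicator_of_mem hx, hW, Set.indicator_of_mem hx,
        integral_of_le hx.2, ← MeasureTheory.integral_indicator measurableSet_Ioc]
      congr 2
      ext t
      simp only [hG, hH, Set.indicator, Set.mem_Ioc] at hx ⊢
      have := hx.1
      have := hx.2
      by_cases h1 : x < t ∧ t ≤ b
      · rw [if_pos h1, if_pos ⟨by linarith, h1.2⟩, if_pos ⟨by linarith, by linarith⟩, mul_comm]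
      · rw [if_neg h1]
        by_cases h2 : 0 < t - x ∧ t - x ≤ b - a
        · rw [if_neg (c := a < t ∧ t ≤ b), zero_mul]
          rintro ⟨h3, h4⟩
          exact h1 ⟨by linarith, h4⟩
        · rw [if_neg h2, mul_zero]
    · rw [Set.indicator_of_notMem hx, hW, Set.indicator_of_notMem hx]
      simp
  have R : ∀ t, (∫ x, W x * (G t * H (t - x))) =
      (Set.Ioc a b).indicator (fun t => g t * ∫ x in a..t, (x - a) ^ α * (t - x) ^ (β - 1)) t := by
    intro t
    by_cases ht : t ∈ Set.Ioc a b
    · have : ∀ x, W x * (G t * H (t - x)) = G t * (W x * H (t - x)) := fun x => by ring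
      simp only [this]
      rw [MeasureTheory.integral_const_mul, Set.indicator_of_mem ht, hG, Set.indicator_of_mem ht,
        integral_of_le ht.1.le, integral_Ioc_eq_integral_Ioo,
        ← MeasureTheory.integral_indicator measurableSet_Ioo]
      congr 2
      ext x
      simp only [hW, hH, Set.indicator, Set.mem_Ioc, Set.mem_Ioo] at ht ⊢
      have := ht.1
      have := ht.2
      by_cases h1 : a < x ∧ x < t
      · rw [if_pos h1, if_pos ⟨h1.1, by linarith⟩, if_pos ⟨by linarith, by linarith⟩]
      · rw [if_neg h1]
        by_cases h2 : 0 < t - x ∧ t - x ≤ b - a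
        · rw [if_neg (c := a < x ∧ x ≤ b), zero_mul]
          rintro ⟨h3, h4⟩
          exact h1 ⟨h3, by linarith⟩
        · rw [if_neg h2, mul_zero]
    · rw [Set.indicator_of_notMem ht, hG, Set.indicator_of_notMem ht]
      simp
  simp only [L, R] at sw
  rw [MeasureTheory.integral_indicator measurableSet_Ioc,
    MeasureTheory.integral_indicator measurableSet_Ioc] at sw
  rw [integral_of_le hab.le, integral_of_le hab.le]
  exact sw


lemma rep_aux (α : ℝ) (hα : 0 < α) (a b : ℝ) (hab : a < b) (f : ℝ → ℝ)
    (hi : IntervalIntegrable (iteratedDerivWithin ⌈α⌉₊ f (Set.Icc a b)) volume a b) :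
    (-1) ^ ⌈α⌉₊ * ∫ t in a..b, iteratedDerivWithin ⌈α⌉₊ f (Set.Icc a b) t *
        ((t - a) ^ ⌈α⌉₊ / (⌈α⌉₊.factorial : ℝ)) =
    ∫ x in a..b, (x - a) ^ α / Real.Gamma (α + 1) * rightCaputoDeriv α a b f x := by
  unfold rightCaputoDeriv
  set m := ⌈α⌉₊ with hm
  have hle : α ≤ m := Nat.le_ceil α
  clear_value m
  by_cases h : α = m
  · simp only [if_pos h]
    rw [← intervalIntegral.integral_const_mul]
    congr 1; ext t
    rw [h, Real.Gamma_nat_eq_factorial, Real.rpow_natCast]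
    ring
  · simp only [if_neg h]
    have hβ : 0 < (m : ℝ) - α := sub_pos.2 (lt_of_le_of_ne hle h)
    have fb := fubini_aux α (m - α) a b hα hβ hab _ hi
    have e1 : ∀ x, (x - a) ^ α / Real.Gamma (α + 1) * ((-1) ^ m / Real.Gamma (m - α) *
        ∫ t in x..b, (t - x) ^ ((m : ℝ) - α - 1) * iteratedDerivWithin m f (Set.Icc a b) t) =
        ((-1) ^ m / (Real.Gamma (α + 1) * Real.Gamma (m - α))) * ((x - a) ^ α *
        ∫ t in x..b, (t - x) ^ ((m : ℝ) - α - 1) * iteratedDerivWithin m f (Set.Icc a b) t) := by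
      intro x
      rw [div_mul_eq_div_div]; ring
    simp only [e1]
    rw [intervalIntegral.integral_const_mul, fb, ← intervalIntegral.integral_const_mul,
      ← intervalIntegral.integral_const_mul]
    apply intervalIntegral.integral_congr_ae
    refine Filter.Eventually.of_forall fun t ht => ?_
    rw [Set.uIoc_of_le hab.le] at ht
    rw [beta_aux' α (m - α) a t hα hβ ht.1]
    have h1 : 0 < Real.Gamma (α + 1) := Real.Gamma_pos_of_pos (by linarith)
    have h2 : 0 < Real.Gamma (m - α) := Real.Gamma_pos_of_pos hβ
    rw [add_sub_cancel, Real.Gamma_nat_eq_factorial, Real.rpow_natCast]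
    field_simp

/-- **Right Caputo fractional Ostrowski inequality, `L^∞` case.** -/
theorem rightCaputo_ostrowski_Linfty (α : ℝ) (hα : 0 < α) (a b : ℝ) (hab : a < b) (f : ℝ → ℝ)
    (hf : IsACDeriv ⌈α⌉₊ a b f)
    (hfb : ∀ k : ℕ, 1 ≤ k → k < ⌈α⌉₊ → iteratedDerivWithin k f (Set.Icc a b) b = 0)
    (hD : eLpNormEssSup (rightCaputoDeriv α a b f)
        (MeasureTheory.volume.restrict (Set.Icc a b)) < ⊤) :
    |f b - (1 / (b - a)) * ∫ u in a..b, f u|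
      ≤ (eLpNormEssSup (rightCaputoDeriv α a b f)
            (MeasureTheory.volume.restrict (Set.Icc a b))).toReal / Real.Gamma (α + 2)
          * (b - a) ^ α := by
  obtain ⟨hc, hi, hr⟩ := hf
  have hch := chain_aux ⌈α⌉₊ a b hab f (Nat.ceil_pos.2 hα) hc hi hr hfb
  rw [rep_aux α hα a b hab f hi] at hch
  set D := rightCaputoDeriv α a b f with hDdef
  set M := (eLpNormEssSup D (volume.restrict (Set.Icc a b))).toReal with hM
  have hb : ∀ᵐ x ∂(volume.restrict (Set.Icc a b)), ‖D x‖ ≤ M := by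
    filter_upwards [ae_le_eLpNormEssSup (f := D) (μ := volume.restrict (Set.Icc a b))] with x hx
    rw [← toReal_enorm]
    exact ENNReal.toReal_mono hD.ne hx
  have hb' : ∀ᵐ x, x ∈ Set.Icc a b → ‖D x‖ ≤ M := (ae_restrict_iff' measurableSet_Icc).1 hb
  have hG : 0 < Real.Gamma (α + 1) := Real.Gamma_pos_of_pos (by linarith)
  have hG2 : Real.Gamma (α + 2) = (α + 1) * Real.Gamma (α + 1) := by
    rw [← Real.Gamma_add_one (by linarith)]; congr 1; ring
  have hba : 0 < b - a := sub_pos.2 hab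
  have hint : ∫ x in a..b, (x - a) ^ α = (b - a) ^ (α + 1) / (α + 1) := by
    rw [intervalIntegral.integral_comp_sub_right (fun x : ℝ => x ^ α) a, sub_self,
      integral_rpow (Or.inl (by linarith)), Real.zero_rpow (by linarith), sub_zero]
  have hbound : |∫ x in a..b, (x - a) ^ α / Real.Gamma (α + 1) * D x| ≤
      ∫ x in a..b, (x - a) ^ α * (M / Real.Gamma (α + 1)) := by
    rw [← Real.norm_eq_abs]
    apply intervalIntegral.norm_integral_le_of_norm_le hab.le
    · filter_upwards [hb'] with x hx hxI
      have h0 : 0 ≤ x - a := by linarith [hxI.1]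
      have h1 := hx ⟨hxI.1.le, hxI.2⟩
      rw [norm_mul, Real.norm_of_nonneg (by positivity)]
      calc _ ≤ (x - a) ^ α / Real.Gamma (α + 1) * M := by gcongr
        _ = _ := by ring
    · apply Continuous.intervalIntegrable
      have : Continuous fun x : ℝ => (x - a) ^ α :=
        (continuous_id.sub continuous_const).rpow_const fun _ => Or.inr hα.le
      exact this.mul continuous_const
  rw [intervalIntegral.integral_mul_const, hint, ← hch] at hbound
  have e : f b - (1 / (b - a)) * ∫ u in a..b, f u =
      -(((∫ u in a..b, f u) - (b - a) * f b) / (b - a)) := by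
    field_simp; ring
  rw [e, abs_neg, abs_div, abs_of_pos hba, div_le_iff₀ hba]
  refine hbound.trans_eq ?_
  rw [hG2, Real.rpow_add_one hba.ne']
  field_simp
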